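/- arXiv:1510.04486 — 2 statements merged into one kernel-verified Lean document; each statement's English description precedes it below -/
import Mathlib

section
/- Let b, c, d be nonnegative integers and let N be the number of functions f : {0,...,b-1} × {0,...,c-1} → {0,1,...,d} that are weakly decreasing in each coordinate (i.e., f(i,j) ≥ f(i',j') whenever i ≤ i' and j ≤ j'); equivalently, N is the number of plane partitions contained in a b × c × d box, which equals the number of lozenge tilings of a hexagon with side lengths b,c,d,b,c,d. Then N · H(b+c) · H(b+d) · H(c+d) = H(b) · H(c) · H(d) · H(b+c+d). -/
/-- The hyperfactorial `H(n) = 0!·1!·⋯·(n-1)!`, with `H(0) = 1`. -/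
def hyperfactorial (n : ℕ) : ℕ := ∏ m ∈ Finset.range n, Nat.factorial m

/-!
Reading a plane partition in a `b × c × d` box along its diagonals and padding it with the values
`0` and `d` gives a Gelfand–Tsetlin pattern with top row `(0, …, 0, d, …, d)`, with `c` zeros and
`b` copies of `d`. The entries of the row below a top row `x₀ ≤ ⋯ ≤ xₙ` are chosen independently
from the intervals `[xᵢ, xᵢ₊₁]`. As sums of binomial coefficients telescope and the determinant is
multilinear in its rows, it follows by induction that the number of patterns with `n` entries in
their top row `x` is the determinant of the matrix `choose (xᵢ + i) j`. This is the Vandermonde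
product of the numbers `xᵢ + i` divided by `H(n)`, and for the top row of the box the product
factors into hyperfactorials.
-/

open Finset Matrix

section Hyperfactorial

lemma hyperfactorial_add (m n : ℕ) :
    hyperfactorial (m + n) = hyperfactorial m * ∏ k ∈ range n, (m + k).factorial :=
  prod_range_add _ m n

lemma prod_range_natCast_sub_eq_descFactorial {R : Type*} [CommRing R] (m k : ℕ) :
    ∏ i ∈ range k, ((m : R) - i) = m.descFactorial k := by
  rw [prod_range_natCast_sub, Nat.descFactorial_eq_prod_range]

lemma prod_descFactorial_mul_hyperfactorial (b c d : ℕ) :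
    (∏ k ∈ range b, (c + d + k).descFactorial c) * hyperfactorial (b + d) * hyperfactorial (c + d) =
      hyperfactorial d * hyperfactorial (b + c + d) := by
  have factorial_quotient : (∏ k ∈ range b, (c + d + k).descFactorial c) *
      ∏ k ∈ range b, (d + k).factorial = ∏ k ∈ range b, (c + d + k).factorial := by
    rw [← prod_mul_distrib]
    refine prod_congr rfl fun k _ ↦ ?_
    rw [mul_comm, add_assoc, ← Nat.factorial_mul_descFactorial (Nat.le_add_right c (d + k)),
      Nat.add_sub_cancel_left]
  rw [add_comm b d, hyperfactorial_add d, show b + c + d = c + d + b by ring,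
    hyperfactorial_add (c + d), ← factorial_quotient]
  ring

end Hyperfactorial

section Vandermonde

/-- The matrix of binomial coefficients `choose (v i) j`, a rescaled Vandermonde matrix whose
determinant counts Gelfand–Tsetlin patterns. -/
def binomialMatrix {n : ℕ} (v : Fin n → ℕ) : Matrix (Fin n) (Fin n) ℤ :=
  of fun i j ↦ ((v i).choose j : ℤ)

lemma prod_Ioi_eq_prod_range {M : Type*} [CommMonoid M] (n : ℕ) (f : ℕ → ℕ → M) :
    ∏ i : Fin n, ∏ j ∈ Ioi i, f i j = ∏ j ∈ range n, ∏ i ∈ range j, f i j := by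
  calc ∏ i : Fin n, ∏ j ∈ Ioi i, f i j = ∏ j : Fin n, ∏ i ∈ Iio j, f i j :=
        prod_comm' (by simp)
    _ = ∏ j : Fin n, ∏ i ∈ range j, f i j := by
        refine prod_congr rfl fun j _ ↦ ?_
        rw [← Nat.Iio_eq_range, ← Fin.map_valEmbedding_Iio, prod_map]
        rfl
    _ = ∏ j ∈ range n, ∏ i ∈ range j, f i j :=
        Fin.prod_univ_eq_prod_range (fun j ↦ ∏ i ∈ range j, f i j) n

lemma hyperfactorial_mul_det_binomialMatrix (n : ℕ) (v : ℕ → ℕ) :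
    hyperfactorial n * (binomialMatrix fun i : Fin n ↦ v i).det =
      ∏ j ∈ range n, ∏ i ∈ range j, ((v j : ℤ) - v i) := by
  have eval_descPochhammer :
      (of fun i j : Fin n ↦ (descPochhammer ℤ j).eval (v i : ℤ)) =
        of fun i j : Fin n ↦ ((j : ℕ).factorial : ℤ) * binomialMatrix (fun i ↦ v i) i j := by
    ext i j
    simp [binomialMatrix, descPochhammer_eval_eq_descFactorial,
      Nat.descFactorial_eq_factorial_mul_choose]
  have det_eq_vandermonde := det_eval_matrixOfPolynomials_eq_det_vandermonde
    (fun i : Fin n ↦ (v i : ℤ)) (fun j ↦ descPochhammer ℤ j)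
    (fun j ↦ descPochhammer_natDegree ℤ j) (fun j ↦ monic_descPochhammer ℤ j)
  rw [eval_descPochhammer, det_mul_row, det_vandermonde,
    Fin.prod_univ_eq_prod_range (fun j ↦ (j.factorial : ℤ)) n,
    prod_Ioi_eq_prod_range n fun i j ↦ (v j : ℤ) - v i] at det_eq_vandermonde
  rw [hyperfactorial, Nat.cast_prod, det_eq_vandermonde]

lemma det_of_sum_row {R ι κ : Type*} [CommRing R] [Fintype ι] [DecidableEq ι]
    (s : ι → Finset κ) (g : ι → κ → ι → R) :
    (of fun i j ↦ ∑ k ∈ s i, g i k j).det =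
      ∑ k ∈ Fintype.piFinset s, (of fun i j ↦ g i (k i) j).det := by
  have rows_eq : (of fun i j ↦ ∑ k ∈ s i, g i k j) = of fun i ↦ ∑ k ∈ s i, g i k := by
    ext i j
    simp only [of_apply, Finset.sum_apply]
  rw [rows_eq]
  exact (detRowAlternating (n := ι) (R := R)).toMultilinearMap.map_sum_finset g s

lemma sum_Icc_choose_add {R : Type*} [Ring R] {u v : ℕ} (huv : u ≤ v + 1) (i j : ℕ) :
    ∑ y ∈ Icc u v, ((y + i).choose j : R) =
      (v + (i + 1)).choose (j + 1) - (u + i).choose (j + 1) := by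
  rw [← Ico_add_one_right_eq_Icc, show v + (i + 1) = v + 1 + i by ring,
    ← sum_Ico_sub (fun y ↦ ((y + i).choose (j + 1) : R)) huv]
  refine sum_congr rfl fun y _ ↦ ?_
  rw [add_right_comm, Nat.choose_succ_succ]
  push_cast
  abel

lemma det_binomialMatrix_succ {n : ℕ} (v : Fin (n + 1) → ℕ) :
    (binomialMatrix v).det = (of fun i j : Fin n ↦
      ((v i.succ).choose (j + 1) - (v i.castSucc).choose (j + 1) : ℤ)).det := by
  let rowDifferences : Matrix (Fin (n + 1)) (Fin (n + 1)) ℤ := of fun i j ↦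
    Fin.cases ((v 0).choose j : ℤ) (fun i ↦ (v i.succ).choose j - (v i.castSucc).choose j) i
  calc (binomialMatrix v).det = rowDifferences.det :=
        det_eq_of_forall_row_eq_smul_add_pred (fun _ ↦ 1) (by simp [binomialMatrix, rowDifferences])
          (by simp [binomialMatrix, rowDifferences])
    _ = _ := by
        rw [det_succ_column_zero, Fin.sum_univ_succ]
        simp [rowDifferences, submatrix]

end Vandermonde

section GelfandTsetlin

variable {n : ℕ} {x : ℕ → ℕ} {T : ℕ → ℕ → ℕ}

/-- Gelfand–Tsetlin patterns with top row `x 0 ≤ ⋯ ≤ x (n - 1)`. The `i`-th entry of the `k`-th row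
(`i < k ≤ n`) is `T (k - 1 - i) i`, so that interlacing of consecutive rows becomes monotonicity in
each coordinate. Outside of the triangle `p + q < n` the array is prescribed by the sequence `x`, so
that distinct arrays are distinct patterns. -/
structure IsGelfandTsetlin (n : ℕ) (x : ℕ → ℕ) (T : ℕ → ℕ → ℕ) : Prop where
  antitone : Antitone T
  monotone (p : ℕ) : Monotone (T p)
  eq_top (p q : ℕ) (h : n ≤ p + q + 1) : T p q = x q

/-- The rows with `n` entries that can occur below `x 0 ≤ ⋯ ≤ x n` in a Gelfand–Tsetlin
pattern. -/
def interlacingRows (n : ℕ) (x : ℕ → ℕ) : Finset (Fin n → ℕ) :=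
  Fintype.piFinset fun i ↦ Icc (x i) (x (i + 1))

/-- The continuation of a row below `x` to an infinite sequence interlacing `x`. -/
def extendRow (x : ℕ → ℕ) (y : Fin n → ℕ) (q : ℕ) : ℕ :=
  if h : q < n then y ⟨q, h⟩ else x (q + 1)

/-- The array with the entries of `T` in the triangle `p + q < n` and those of `x` outside of it;
it serves both to remove and to add a top row. -/
def extendTriangle (n : ℕ) (T : ℕ → ℕ → ℕ) (x : ℕ → ℕ) (p q : ℕ) : ℕ :=
  if p + q < n then T p q else x q

@[simp] lemma extendRow_val (x : ℕ → ℕ) (y : Fin n → ℕ) (i : Fin n) : extendRow x y i = y i := by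
  simp [extendRow]

lemma extendRow_mem_Icc (hx : Monotone x) {y : Fin n → ℕ} (hy : y ∈ interlacingRows n x) (q : ℕ) :
    extendRow x y q ∈ Icc (x q) (x (q + 1)) := by
  by_cases hq : q < n
  · simpa only [extendRow, hq, dif_pos] using Fintype.mem_piFinset.mp hy ⟨q, hq⟩
  · simpa [extendRow, hq] using hx q.le_succ

lemma monotone_extendRow (hx : Monotone x) {y : Fin n → ℕ} (hy : y ∈ interlacingRows n x) :
    Monotone (extendRow x y) :=
  monotone_nat_of_le_succ fun q ↦ (mem_Icc.mp (extendRow_mem_Icc hx hy q)).2.trans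
    (mem_Icc.mp (extendRow_mem_Icc hx hy (q + 1))).1

namespace IsGelfandTsetlin

lemma secondRow_mem_interlacingRows (hT : IsGelfandTsetlin (n + 1) x T) :
    (fun i : Fin n ↦ T (n - 1 - i) i) ∈ interlacingRows n x := by
  refine Fintype.mem_piFinset.mpr fun i ↦ mem_Icc.mpr ⟨?_, ?_⟩
  · rw [← hT.eq_top (n - i) i (by lia)]
    exact hT.antitone (by lia) i
  · rw [← hT.eq_top (n - 1 - i) (i + 1) (by lia)]
    exact hT.monotone _ (by lia)

lemma removeTop (hT : IsGelfandTsetlin (n + 1) x T) (hx : Monotone x) :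
    let z := extendRow x fun i : Fin n ↦ T (n - 1 - i) i
    IsGelfandTsetlin n z (extendTriangle n T z) := by
  intro z
  have z_mono : Monotone z := monotone_extendRow hx hT.secondRow_mem_interlacingRows
  have z_eq (p q : ℕ) (hpq : p + q + 1 = n) : z q = T p q := by
    obtain rfl : p = n - 1 - q := by lia
    exact extendRow_val x _ ⟨q, by lia⟩
  refine ⟨antitone_nat_of_succ_le fun p q ↦ ?_, fun p ↦ monotone_nat_of_le_succ fun q ↦ ?_,
    fun p q hpq ↦ ?_⟩
  · have := hT.antitone p.le_succ q
    have := z_eq p q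
    grind [extendTriangle]
  · have := hT.monotone p q.le_succ
    have := z_mono q.le_succ
    have := z_eq p q
    grind [extendTriangle]
  · have := z_eq p q
    grind [extendTriangle]

lemma addTop {y : Fin n → ℕ} (hT : IsGelfandTsetlin n (extendRow x y) T) (hx : Monotone x)
    (hy : y ∈ interlacingRows n x) : IsGelfandTsetlin (n + 1) x (extendTriangle n T x) := by
  have interlace (p q : ℕ) (hpq : p + q + 1 = n) : T p q ∈ Icc (x q) (x (q + 1)) :=
    hT.eq_top p q hpq.ge ▸ extendRow_mem_Icc hx hy q
  refine ⟨antitone_nat_of_succ_le fun p q ↦ ?_, fun p ↦ monotone_nat_of_le_succ fun q ↦ ?_,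
    fun p q hpq ↦ if_neg (by lia)⟩
  · have := hT.antitone p.le_succ q
    have := interlace p q
    grind [extendTriangle]
  · have := hT.monotone p q.le_succ
    have := interlace p q
    have := hx q.le_succ
    grind [extendTriangle]

end IsGelfandTsetlin

/-- Removing the top row of a Gelfand–Tsetlin pattern. -/
def gelfandTsetlinSuccEquiv (n : ℕ) (hx : Monotone x) :
    {T // IsGelfandTsetlin (n + 1) x T} ≃
      Σ y : interlacingRows n x, {T // IsGelfandTsetlin n (extendRow x y.1) T} where
  toFun T := ⟨⟨_, T.2.secondRow_mem_interlacingRows⟩, ⟨_, T.2.removeTop hx⟩⟩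
  invFun yT := ⟨_, yT.2.2.addTop hx yT.1.2⟩
  left_inv T := by
    ext p q
    have := T.2.eq_top p q
    grind [extendTriangle]
  right_inv := by
    rintro ⟨⟨y, hy⟩, T, hT⟩
    have secondRow_eq : (fun i : Fin n ↦ extendTriangle n T x (n - 1 - i) i) = y := by
      funext i
      rw [extendTriangle, if_pos (by lia), hT.eq_top _ _ (by lia), extendRow_val]
    refine Sigma.subtype_ext (Subtype.ext secondRow_eq) ?_
    funext p q
    have := hT.eq_top p q
    grind [extendTriangle]

lemma isGelfandTsetlin_zero_iff (hx : Monotone x) : IsGelfandTsetlin 0 x T ↔ T = fun _ ↦ x := by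
  refine ⟨fun hT ↦ ?_, ?_⟩
  · funext p q
    exact hT.eq_top p q (Nat.zero_le _)
  · rintro rfl
    exact ⟨antitone_const, fun _ ↦ hx, fun _ _ _ ↦ rfl⟩

lemma finite_gelfandTsetlin (n : ℕ) (hx : Monotone x) : Finite {T // IsGelfandTsetlin n x T} := by
  induction n generalizing x with
  | zero =>
    simp only [isGelfandTsetlin_zero_iff hx]
    infer_instance
  | succ n ih =>
    have (y : interlacingRows n x) : Finite {T // IsGelfandTsetlin n (extendRow x y.1) T} :=
      ih (monotone_extendRow hx y.2)
    exact Finite.of_equiv _ (gelfandTsetlinSuccEquiv n hx).symm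

lemma card_gelfandTsetlin_succ (n : ℕ) (hx : Monotone x) :
    Nat.card {T // IsGelfandTsetlin (n + 1) x T} =
      ∑ y ∈ interlacingRows n x, Nat.card {T // IsGelfandTsetlin n (extendRow x y) T} := by
  have (y : interlacingRows n x) : Finite {T // IsGelfandTsetlin n (extendRow x y.1) T} :=
    finite_gelfandTsetlin n (monotone_extendRow hx y.2)
  rw [Nat.card_congr (gelfandTsetlinSuccEquiv n hx), Nat.card_sigma]
  exact sum_coe_sort (interlacingRows n x)
    fun y ↦ Nat.card {T // IsGelfandTsetlin n (extendRow x y) T}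

lemma sum_interlacingRows_det_binomialMatrix (n : ℕ) (hx : Monotone x) :
    ∑ y ∈ interlacingRows n x, (binomialMatrix fun i ↦ y i + i).det =
      (binomialMatrix fun i : Fin (n + 1) ↦ x i + i).det := by
  calc ∑ y ∈ interlacingRows n x, (binomialMatrix fun i ↦ y i + i).det
      = (of fun i j : Fin n ↦ ∑ y ∈ Icc (x i) (x (i + 1)), ((y + i).choose j : ℤ)).det :=
        (det_of_sum_row (fun i : Fin n ↦ Icc (x i) (x (i + 1)))
          fun i y j ↦ ((y + i).choose j : ℤ)).symm
    _ = _ := by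
        rw [det_binomialMatrix_succ]
        congr 1
        ext i j
        simpa using sum_Icc_choose_add (R := ℤ) ((hx (i : ℕ).le_succ).trans (Nat.le_succ _)) i j

theorem card_gelfandTsetlin_eq_det (n : ℕ) (hx : Monotone x) :
    (Nat.card {T // IsGelfandTsetlin n x T} : ℤ) =
      (binomialMatrix fun i : Fin n ↦ x i + i).det := by
  induction n generalizing x with
  | zero => simp [isGelfandTsetlin_zero_iff hx]
  | succ n ih =>
    rw [card_gelfandTsetlin_succ n hx, Nat.cast_sum, ← sum_interlacingRows_det_binomialMatrix n hx]
    refine sum_congr rfl fun y hy ↦ ?_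
    simpa only [extendRow_val] using ih (monotone_extendRow hx hy)

theorem hyperfactorial_mul_card_gelfandTsetlin (n : ℕ) (hx : Monotone x) :
    (hyperfactorial n : ℤ) * Nat.card {T // IsGelfandTsetlin n x T} =
      ∏ j ∈ range n, ∏ i ∈ range j, (((x j + j : ℕ) : ℤ) - (x i + i : ℕ)) := by
  rw [card_gelfandTsetlin_eq_det n hx]
  exact hyperfactorial_mul_det_binomialMatrix n fun i ↦ x i + i

end GelfandTsetlin

section Box

/-- The top row `(0, …, 0, d, …, d)`, with `c` zeros, of the Gelfand–Tsetlin patterns that encode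
plane partitions in a box. -/
def boxRow (c d q : ℕ) : ℕ := if q < c then 0 else d

lemma monotone_boxRow (c d : ℕ) : Monotone (boxRow c d) := by
  intro q q' h
  grind [boxRow]

/-- Plane partitions in a `b × c × d` box, with entries weakly decreasing in each coordinate. -/
abbrev BoxedPlanePartition (b c d : ℕ) : Type :=
  {f : Fin b × Fin c → Fin (d + 1) //
    ∀ p q : Fin b × Fin c, p.1 ≤ q.1 → p.2 ≤ q.2 → f q ≤ f p}

variable {b c d : ℕ}

/-- The array of a plane partition with its columns reversed, continued by `d` to the right and
by `0` below. -/
def padArray (f : Fin b × Fin c → Fin (d + 1)) (p q : ℕ) : ℕ :=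
  if hq : q < c then if hp : p < b then f (⟨p, hp⟩, Fin.rev ⟨q, hq⟩) else 0 else d

lemma isGelfandTsetlin_padArray (f : BoxedPlanePartition b c d) :
    IsGelfandTsetlin (b + c) (boxRow c d) (padArray f.1) := by
  refine ⟨fun p p' hp q ↦ ?_, fun p q q' hq ↦ ?_, fun p q hpq ↦ ?_⟩
  · unfold padArray
    split_ifs with hq hp'
    · exact f.2 _ _ hp le_rfl
    all_goals lia
  · unfold padArray
    split_ifs with hqc hp hq'c
    · exact f.2 _ _ le_rfl (Fin.rev_le_rev.mpr hq)
    all_goals lia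
  · grind [padArray, boxRow]

namespace IsGelfandTsetlin

variable {T : ℕ → ℕ → ℕ}

lemma le_of_boxRow (hT : IsGelfandTsetlin (b + c) (boxRow c d) T) (p q : ℕ) :
    T p q ≤ d :=
  calc T p q ≤ T p (q + (b + c)) := hT.monotone p (by lia)
    _ = d := by rw [hT.eq_top _ _ (by lia), boxRow, if_neg (by lia)]

lemma eq_of_boxRow (hT : IsGelfandTsetlin (b + c) (boxRow c d) T) {p q : ℕ}
    (hq : c ≤ q) : T p q = d := by
  refine (hT.le_of_boxRow p q).antisymm ?_
  calc d = T (p + (b + c)) q := by rw [hT.eq_top _ _ (by lia), boxRow, if_neg (by lia)]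
    _ ≤ T p q := hT.antitone (by lia) q

lemma eq_zero_of_boxRow (hT : IsGelfandTsetlin (b + c) (boxRow c d) T) {p q : ℕ}
    (hp : b ≤ p) (hq : q < c) : T p q = 0 := by
  refine Nat.le_zero.mp ?_
  calc T p q ≤ T p (c - 1) := hT.monotone p (by lia)
    _ = 0 := by rw [hT.eq_top _ _ (by lia), boxRow, if_pos (by lia)]

end IsGelfandTsetlin

/-- Plane partitions in a box as Gelfand–Tsetlin patterns. -/
def boxedPlanePartitionEquiv (b c d : ℕ) :
    BoxedPlanePartition b c d ≃ {T // IsGelfandTsetlin (b + c) (boxRow c d) T} where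
  toFun f := ⟨padArray f.1, isGelfandTsetlin_padArray f⟩
  invFun T := ⟨fun p ↦ ⟨T.1 p.1 p.2.rev, Nat.lt_succ_of_le (T.2.le_of_boxRow _ _)⟩,
    fun p q h₁ h₂ ↦ (T.2.antitone h₁ _).trans (T.2.monotone _ (Fin.rev_le_rev.mpr h₂))⟩
  left_inv f := by
    ext p
    simp only [padArray, Fin.is_lt, dite_true, Fin.eta, Fin.rev_rev, Prod.mk.eta]
  right_inv T := by
    ext p q
    have := T.2.eq_of_boxRow (p := p) (q := q)
    have := T.2.eq_zero_of_boxRow (p := p) (q := q)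
    grind [padArray]

lemma prod_range_sub_boxRow (b c d : ℕ) :
    ∏ j ∈ range (b + c), ∏ i ∈ range j, (((boxRow c d j + j : ℕ) : ℤ) - (boxRow c d i + i : ℕ)) =
      hyperfactorial b * hyperfactorial c * ∏ k ∈ range b, ((c + d + k).descFactorial c : ℤ) := by
  have factorial_eq (k : ℕ) : ∏ i ∈ range k, ((k : ℤ) - i) = k.factorial := by
    rw [prod_range_natCast_sub_eq_descFactorial, Nat.descFactorial_self]
  have prod_zeros : ∏ j ∈ range c, ∏ i ∈ range j,
      (((boxRow c d j + j : ℕ) : ℤ) - (boxRow c d i + i : ℕ)) = hyperfactorial c := by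
    rw [hyperfactorial, Nat.cast_prod]
    refine prod_congr rfl fun j hj ↦ ?_
    rw [← factorial_eq]
    refine prod_congr rfl fun i hi ↦ ?_
    grind [boxRow]
  have prod_row (k : ℕ) : ∏ i ∈ range (c + k),
      (((boxRow c d (c + k) + (c + k) : ℕ) : ℤ) - (boxRow c d i + i : ℕ)) =
        (c + d + k).descFactorial c * k.factorial := by
    rw [prod_range_add, ← prod_range_natCast_sub_eq_descFactorial (R := ℤ), ← factorial_eq]
    congr 1 <;> refine prod_congr rfl fun i hi ↦ ?_ <;> grind [boxRow]
  rw [add_comm b c, prod_range_add, prod_zeros, prod_congr rfl fun k _ ↦ prod_row k,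
    prod_mul_distrib, ← Nat.cast_prod (R := ℤ) Nat.factorial, ← hyperfactorial]
  ring

theorem hyperfactorial_mul_card_boxedPlanePartition (b c d : ℕ) :
    hyperfactorial (b + c) * Nat.card (BoxedPlanePartition b c d) =
      hyperfactorial b * hyperfactorial c * ∏ k ∈ range b, (c + d + k).descFactorial c := by
  have := hyperfactorial_mul_card_gelfandTsetlin (b + c) (monotone_boxRow c d)
  rw [prod_range_sub_boxRow, ← Nat.card_congr (boxedPlanePartitionEquiv b c d)] at this
  exact_mod_cast this

end Box

/-- MacMahon's boxed plane partition theorem: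
the number `N` of functions `f : {0,…,b-1} × {0,…,c-1} → {0,…,d}` that are weakly
decreasing in each coordinate satisfies
`N · H(b+c) · H(b+d) · H(c+d) = H(b) · H(c) · H(d) · H(b+c+d)`. -/
theorem stmt_0 (b c d : ℕ) :
    Nat.card {f : Fin b × Fin c → Fin (d + 1) //
        ∀ p q : Fin b × Fin c, p.1 ≤ q.1 → p.2 ≤ q.2 → f q ≤ f p} *
      hyperfactorial (b + c) * hyperfactorial (b + d) * hyperfactorial (c + d) =
    hyperfactorial b * hyperfactorial c * hyperfactorial d *
      hyperfactorial (b + c + d) := by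
  calc
    _ = hyperfactorial (b + c) * Nat.card (BoxedPlanePartition b c d) *
          hyperfactorial (b + d) * hyperfactorial (c + d) := by
        rw [mul_comm (Nat.card _)]
    _ = hyperfactorial b * hyperfactorial c * ((∏ k ∈ range b, (c + d + k).descFactorial c) *
          hyperfactorial (b + d) * hyperfactorial (c + d)) := by
        rw [hyperfactorial_mul_card_boxedPlanePartition]
        ring
    _ = _ := by
        rw [prod_descFactorial_mul_hyperfactorial]
        ring
end

section
/- Let G be a finite simple graph on vertex set V with a bipartition V = V₁ ∪ V₂ (every edge of G has one endpoint in V₁ and one in V₂). Let S ⊆ V and let H be the subgraph of G induced on S. Assume: (i) (Separating Condition) no edge of G joins a vertex of S ∩ V₁ to a vertex of V \ S; and (ii) |S ∩ V₁| ≥ |S ∩ V₂|. Then the number of perfect matchings of G equals the number of perfect matchings of H multiplied by the number of perfect matchings of the subgraph of G induced on V \ S. In particular, if |S ∩ V₁| > |S ∩ V₂| then G has no perfect matching. -/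
/-!
In a perfect matching every vertex of `A = S ∩ V₁` has its partner in `B = S \ V₁`, so taking
partners embeds `A` into `B`. As `|B| ≤ |A|`, every vertex of `B` is the partner of a vertex of `A`,
and no matching edge leaves `S = A ∪ B`. The perfect matchings without edges leaving `S` are the
unions of a perfect matching of `G[S]` and one of `G[Sᶜ]`.
-/

open Cardinal SimpleGraph

/-- The type of perfect matchings of `G`; its cardinality is the number counted in the theorem. -/
abbrev PerfectMatching {V : Type*} (G : SimpleGraph V) :=
  {M : G.Subgraph // M.IsPerfectMatching}

/-- `M` splits along `S` if no edge of `M` joins `S` to its complement. -/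
def SplitsAlong {V : Type*} {G : SimpleGraph V} (M : G.Subgraph) (S : Set V) : Prop :=
  ∀ ⦃u v⦄, M.Adj u v → (u ∈ S ↔ v ∈ S)

namespace SplitsAlong

variable {V : Type*} {G : SimpleGraph V} {M : G.Subgraph} {S : Set V}

theorem of_forall_adj (h : ∀ ⦃u v⦄, M.Adj u v → u ∈ S → v ∈ S) : SplitsAlong M S :=
  fun _ _ huv ↦ ⟨h huv, h huv.symm⟩

theorem compl (h : SplitsAlong M S) : SplitsAlong M Sᶜ :=
  fun _ _ huv ↦ not_congr (h huv)

theorem isPerfectMatching_comap_induce (h : SplitsAlong M S) (hM : M.IsPerfectMatching) :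
    (M.comap (Embedding.induce S).toHom).IsPerfectMatching := by
  rw [Subgraph.isPerfectMatching_iff] at hM ⊢
  rintro ⟨u, hu⟩
  obtain ⟨v, huv, v_unique⟩ := hM u
  exact ⟨⟨v, (h huv).1 hu⟩, ⟨M.adj_sub huv, huv⟩, fun w hw ↦ Subtype.ext (v_unique w hw.2)⟩

end SplitsAlong

section Counting

variable {V : Type*} {G : SimpleGraph V} {M : G.Subgraph} {A B : Set V}

theorem exists_injOn_partner (hM : M.IsMatching) (hA : A ⊆ M.verts) :
    ∃ p : V → V, (∀ u ∈ A, M.Adj u (p u)) ∧ A.InjOn p := by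
  choose! p adj_p using fun u (hu : u ∈ A) ↦ (hM (hA hu)).exists
  exact ⟨p, adj_p, fun u hu v hv huv ↦ hM.eq_of_adj_right (adj_p u hu) (huv ▸ adj_p v hv)⟩

theorem encard_le_of_adj_mem (hM : M.IsMatching) (hA : A ⊆ M.verts)
    (hAB : ∀ ⦃u v⦄, M.Adj u v → u ∈ A → v ∈ B) : A.encard ≤ B.encard := by
  obtain ⟨p, adj_p, p_injOn⟩ := exists_injOn_partner hM hA
  exact Set.encard_le_encard_of_injOn (fun u hu ↦ hAB (adj_p u hu) hu) p_injOn

theorem splitsAlong_union_of_adj_mem (hM : M.IsMatching) (hA : A ⊆ M.verts) (hB : B.Finite)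
    (hAB : ∀ ⦃u v⦄, M.Adj u v → u ∈ A → v ∈ B) (hcard : B.encard ≤ A.encard) :
    SplitsAlong M (A ∪ B) := by
  obtain ⟨p, adj_p, p_injOn⟩ := exists_injOn_partner hM hA
  have image_subset : p '' A ⊆ B := Set.image_subset_iff.2 fun u hu ↦ hAB (adj_p u hu) hu
  have image_eq : p '' A = B :=
    (hB.subset image_subset).eq_of_subset_of_encard_le image_subset
      (hcard.trans_eq p_injOn.encard_image.symm)
  refine .of_forall_adj fun u v huv hu ↦ ?_
  rcases hu with hu | hu
  · exact .inr (hAB huv hu)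
  · obtain ⟨a, ha, rfl⟩ := image_eq.ge hu
    obtain rfl : a = v := hM.eq_of_adj_left (adj_p a ha).symm huv
    exact .inl ha

end Counting

namespace PerfectMatching

variable {V : Type*} {G : SimpleGraph V} {S : Set V}

theorem ext_adj {M N : G.Subgraph} (hM : M.IsPerfectMatching) (hN : N.IsPerfectMatching)
    (h : ∀ u v, M.Adj u v ↔ N.Adj u v) : M = N :=
  Subgraph.ext (hM.2.verts_eq_univ.trans hN.2.verts_eq_univ.symm) (by ext u v; exact h u v)

/-- The union, as a subgraph of `G`, of a subgraph of `G[S]` and a subgraph of `G[Sᶜ]`. -/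
def glue (M : (G.induce S).Subgraph) (N : (G.induce Sᶜ).Subgraph) : G.Subgraph :=
  M.map (Embedding.induce S).toHom ⊔ N.map (Embedding.induce Sᶜ).toHom

section Glue

variable {M : (G.induce S).Subgraph} {N : (G.induce Sᶜ).Subgraph}

theorem glue_adj {u v : V} : (glue M N).Adj u v ↔
    (∃ (hu : u ∈ S) (hv : v ∈ S), M.Adj ⟨u, hu⟩ ⟨v, hv⟩) ∨
      ∃ (hu : u ∈ Sᶜ) (hv : v ∈ Sᶜ), N.Adj ⟨u, hu⟩ ⟨v, hv⟩ := by
  simp [glue, Relation.Map]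

theorem comap_glue_adj (u v : S) :
    ((glue M N).comap (Embedding.induce S).toHom).Adj u v ↔ M.Adj u v := by
  simpa [glue_adj] using fun h ↦ M.adj_sub h

theorem comap_compl_glue_adj (u v : ↥Sᶜ) :
    ((glue M N).comap (Embedding.induce Sᶜ).toHom).Adj u v ↔ N.Adj u v := by
  have hu : (u : V) ∉ S := u.2
  simpa [glue_adj, hu] using fun h ↦ N.adj_sub h

theorem glue_comap_adj {M : G.Subgraph} (hM : SplitsAlong M S) (u v : V) :
    (glue (M.comap (Embedding.induce S).toHom) (M.comap (Embedding.induce Sᶜ).toHom)).Adj u v ↔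
      M.Adj u v := by
  rw [glue_adj]
  constructor
  · rintro (⟨_, _, _, huv⟩ | ⟨_, _, _, huv⟩) <;> exact huv
  · intro huv
    by_cases hu : u ∈ S
    · exact .inl ⟨hu, (hM huv).1 hu, M.adj_sub huv, huv⟩
    · exact .inr ⟨hu, (hM.compl huv).1 hu, M.adj_sub huv, huv⟩

theorem splitsAlong_glue : SplitsAlong (glue M N) S := by
  intro u v huv
  rcases glue_adj.1 huv with ⟨hu, hv, -⟩ | ⟨hu, hv, -⟩
  · exact iff_of_true hu hv
  · exact iff_of_false hu hv

theorem isPerfectMatching_glue (hM : M.IsPerfectMatching) (hN : N.IsPerfectMatching) :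
    (glue M N).IsPerfectMatching := by
  have verts_map {T : Set V} {L : (G.induce T).Subgraph} (hL : L.IsPerfectMatching) :
      (L.map (Embedding.induce T).toHom).verts = T := by
    rw [Subgraph.map_verts, hL.2.verts_eq_univ, Set.image_univ]
    exact Subtype.range_coe
  have disjoint_verts : Disjoint (M.map (Embedding.induce S).toHom).verts
      (N.map (Embedding.induce Sᶜ).toHom).verts := by
    rw [verts_map hM, verts_map hN]
    exact disjoint_compl_right
  constructor
  · exact (hM.1.map _ Subtype.val_injective).sup (hN.1.map _ Subtype.val_injective)
      (disjoint_verts.mono (Subgraph.support_subset_verts _) (Subgraph.support_subset_verts _))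
  · rw [Subgraph.isSpanning_iff, glue, Subgraph.verts_sup, verts_map hM, verts_map hN,
      Set.union_compl_self]

end Glue

/-- The perfect matchings of `G` that split along `S` correspond to pairs of perfect matchings of
`G[S]` and `G[Sᶜ]`, by restriction in one direction and gluing in the other. -/
def splitEquiv (S : Set V) :
    {M : PerfectMatching G // SplitsAlong M.1 S} ≃
      PerfectMatching (G.induce S) × PerfectMatching (G.induce Sᶜ) where
  toFun M := ⟨⟨_, M.2.isPerfectMatching_comap_induce M.1.2⟩,
    ⟨_, M.2.compl.isPerfectMatching_comap_induce M.1.2⟩⟩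
  invFun P := ⟨⟨glue P.1.1 P.2.1, isPerfectMatching_glue P.1.2 P.2.2⟩, splitsAlong_glue⟩
  left_inv M := Subtype.ext <| Subtype.ext <|
    ext_adj (isPerfectMatching_glue (M.2.isPerfectMatching_comap_induce M.1.2)
      (M.2.compl.isPerfectMatching_comap_induce M.1.2)) M.1.2 (glue_comap_adj M.2)
  right_inv P := by
    have hglue := isPerfectMatching_glue P.1.2 P.2.2
    refine Prod.ext (Subtype.ext ?_) (Subtype.ext ?_)
    · exact ext_adj (splitsAlong_glue.isPerfectMatching_comap_induce hglue) P.1.2 comap_glue_adj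
    · exact ext_adj (splitsAlong_glue.compl.isPerfectMatching_comap_induce hglue) P.2.2
        comap_compl_glue_adj

end PerfectMatching

theorem stmt_1_general {V : Type*} (G : SimpleGraph V) (A B : Set V) (hB : B.Finite)
    (hAB : ∀ u v : V, G.Adj u v → u ∈ A → v ∈ B) (hcard : B.encard ≤ A.encard) :
    #(PerfectMatching G) =
        #(PerfectMatching (G.induce (A ∪ B))) * #(PerfectMatching (G.induce (A ∪ B)ᶜ)) ∧
      (B.encard < A.encard → #(PerfectMatching G) = 0) := by
  have partner_mem (M : PerfectMatching G) ⦃u v : V⦄ (huv : M.1.Adj u v) : u ∈ A → v ∈ B :=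
    hAB u v (M.1.adj_sub huv)
  have covers (M : PerfectMatching G) : A ⊆ M.1.verts := fun u _ ↦ M.2.2 u
  constructor
  · have splits (M : PerfectMatching G) : SplitsAlong M.1 (A ∪ B) :=
      splitsAlong_union_of_adj_mem M.2.1 (covers M) hB (partner_mem M) hcard
    rw [Cardinal.mul_def]
    exact Cardinal.mk_congr
      ((Equiv.subtypeUnivEquiv splits).symm.trans (PerfectMatching.splitEquiv (A ∪ B)))
  · intro hlt
    exact Cardinal.mk_eq_zero_iff.2
      ⟨fun M ↦ hlt.not_ge (encard_le_of_adj_mem M.2.1 (covers M) (partner_mem M))⟩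

/-- Graph Splitting Lemma: `G` is a finite simple graph with bipartition `V₁ ∪ V₁ᶜ`
(every edge joins `V₁` to its complement).  If `S` is a vertex subset such that no
edge of `G` joins a vertex of `S ∩ V₁` to a vertex outside `S`, and
`|S ∩ V₁| ≥ |S ∩ V₁ᶜ|`, then the number of perfect matchings of `G` equals the
product of the numbers of perfect matchings of the subgraphs induced on `S` and on
`Sᶜ`.  In particular, if `|S ∩ V₁| > |S ∩ V₁ᶜ|` then `G` has no perfect matching. -/
theorem stmt_1 {V : Type*} [Fintype V] (G : SimpleGraph V) (V1 : Set V)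
    (hbip : ∀ u v : V, G.Adj u v → (u ∈ V1 ↔ v ∉ V1))
    (S : Set V)
    (hsep : ∀ u v : V, G.Adj u v → u ∈ S ∩ V1 → v ∈ S)
    (hcard : (S ∩ V1ᶜ).ncard ≤ (S ∩ V1).ncard) :
    Nat.card {M : G.Subgraph // M.IsPerfectMatching} =
        Nat.card {M : (G.induce S).Subgraph // M.IsPerfectMatching} *
          Nat.card {M : (G.induce Sᶜ).Subgraph // M.IsPerfectMatching} ∧
      ((S ∩ V1ᶜ).ncard < (S ∩ V1).ncard →
        Nat.card {M : G.Subgraph // M.IsPerfectMatching} = 0) := by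
  have h := stmt_1_general G (S ∩ V1) (S ∩ V1ᶜ) (Set.toFinite _)
    fun u v huv hu ↦ ⟨hsep u v huv hu, (hbip u v huv).1 hu.2⟩
  rw [← (Set.toFinite _).cast_ncard_eq, ← (Set.toFinite _).cast_ncard_eq, Nat.cast_le,
    Nat.cast_lt, Set.inter_union_compl] at h
  exact (h hcard).imp (fun hmul ↦ (congrArg Cardinal.toNat hmul).trans (Cardinal.toNat_mul _ _))
    fun hzero hlt ↦ (congrArg Cardinal.toNat (hzero hlt)).trans Cardinal.zero_toNat
end
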